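/- There exists a universal constant C > 0 such that for all integers n ≥ 2, m ≥ 1 with 2 ln n ≤ m and all s ∈ (0, 1/2], the following holds: with Y_1(t),...,Y_n(t) i.i.d. Binomial(m, t/(nm)) for each t, one has Σ_{t=⌈(1−s)nm⌉}^{nm} E[max_{1≤i≤n} Y_i(t) − t/n]/t ≤ C·(s + 1/(nm))·√(m·ln n). -/

import Mathlib

open Finset

/-- The maximum entry of a tuple `j : Fin n → Fin (m+1)`, as a natural number. -/
def maxEntry {n m : ℕ} (j : Fin n → Fin (m + 1)) : ℕ :=
  Finset.univ.sup (fun i => (j i : ℕ))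

/-- The probability `P(Y = k)` for `Y ~ Binomial(m, p)`. -/
noncomputable def binomPMF (m : ℕ) (p : ℝ) (k : ℕ) : ℝ :=
  (Nat.choose m k : ℝ) * p ^ k * (1 - p) ^ (m - k)

/-- Expected value of `max_i Y_i` for `Y_1, …, Y_n` i.i.d. `Binomial(m, p)`. -/
noncomputable def expMaxBinom (n m : ℕ) (p : ℝ) : ℝ :=
  ∑ j : Fin n → Fin (m + 1), (∏ i, binomPMF m p (j i : ℕ)) * (maxEntry j : ℝ)

/-- `∑ₖ P(Y = k) xᵏ = (p x + (1 - p))ᵐ` for `Y ~ Binomial(m, p)`. -/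
lemma sum_binomPMF_mul_pow (m : ℕ) (p x : ℝ) :
    ∑ k : Fin (m + 1), binomPMF m p k * x ^ (k : ℕ) = (p * x + (1 - p)) ^ m := by
  rw [Fin.sum_univ_eq_sum_range (fun k => binomPMF m p k * x ^ k), add_pow]
  refine Finset.sum_congr rfl fun k _ => ?_
  rw [binomPMF, mul_pow]
  ring

lemma sum_binomPMF (m : ℕ) (p : ℝ) : ∑ k : Fin (m + 1), binomPMF m p k = 1 := by
  simpa using sum_binomPMF_mul_pow m p 1

lemma binomPMF_nonneg {p : ℝ} (hp0 : 0 ≤ p) (hp1 : p ≤ 1) (m k : ℕ) : 0 ≤ binomPMF m p k := by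
  have : 0 ≤ 1 - p := sub_nonneg.2 hp1
  unfold binomPMF
  positivity

lemma sum_prod_binomPMF (n m : ℕ) (p : ℝ) :
    ∑ j : Fin n → Fin (m + 1), ∏ i, binomPMF m p (j i : ℕ) = 1 := by
  rw [← Fintype.prod_sum (fun (_ : Fin n) (k : Fin (m + 1)) => binomPMF m p k)]
  simp [sum_binomPMF]

/-- The generating function of a single coordinate under the product measure. -/
lemma sum_prod_binomPMF_mul_pow (n m : ℕ) (p x : ℝ) (l : Fin n) :
    ∑ j : Fin n → Fin (m + 1), (∏ i, binomPMF m p (j i : ℕ)) * x ^ (j l : ℕ) =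
      (p * x + (1 - p)) ^ m := by
  have h (j : Fin n → Fin (m + 1)) : (∏ i, binomPMF m p (j i : ℕ)) * x ^ (j l : ℕ) =
      ∏ i, binomPMF m p (j i : ℕ) * (if i = l then x ^ (j i : ℕ) else 1) := by
    rw [Finset.prod_mul_distrib]
    simp
  simp_rw [h]
  rw [← Fintype.prod_sum (fun (i : Fin n) (k : Fin (m + 1)) =>
    binomPMF m p k * (if i = l then x ^ (k : ℕ) else 1)), Finset.prod_eq_single l]
  · simp [sum_binomPMF_mul_pow]
  · intro i _ hi
    simp [hi, sum_binomPMF]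
  · simp

/-- Union bound: the maximum is dominated by the sum over the coordinates. -/
lemma pow_maxEntry_le {n m : ℕ} (hn : 0 < n) {x : ℝ} (hx : 0 ≤ x) (j : Fin n → Fin (m + 1)) :
    x ^ maxEntry j ≤ ∑ l, x ^ (j l : ℕ) := by
  obtain ⟨l, -, hl⟩ := Finset.exists_mem_eq_sup (Finset.univ : Finset (Fin n))
    ⟨⟨0, hn⟩, Finset.mem_univ _⟩ (fun i => (j i : ℕ))
  rw [maxEntry, hl]
  exact Finset.single_le_sum (f := fun l => x ^ (j l : ℕ)) (fun i _ => by positivity)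
    (Finset.mem_univ l)

lemma sum_prod_binomPMF_mul_pow_maxEntry_le {n : ℕ} (hn : 0 < n) (m : ℕ) {p x : ℝ}
    (hp0 : 0 ≤ p) (hp1 : p ≤ 1) (hx : 0 ≤ x) :
    ∑ j : Fin n → Fin (m + 1), (∏ i, binomPMF m p (j i : ℕ)) * x ^ maxEntry j ≤
      n * (p * x + (1 - p)) ^ m := by
  calc _ ≤ ∑ j : Fin n → Fin (m + 1), (∏ i, binomPMF m p (j i : ℕ)) * ∑ l, x ^ (j l : ℕ) := by
        gcongr with j
        · exact Finset.prod_nonneg fun i _ => binomPMF_nonneg hp0 hp1 _ _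
        · exact pow_maxEntry_le hn hx j
    _ = n * (p * x + (1 - p)) ^ m := by
        simp_rw [Finset.mul_sum]
        rw [Finset.sum_comm]
        simp [sum_prod_binomPMF_mul_pow]

lemma bernoulli_mgf_le {p r : ℝ} (hp0 : 0 ≤ p) (hr0 : 0 ≤ r) (hr1 : r ≤ 1) :
    p * Real.exp r + (1 - p) ≤ Real.exp (p * (r + r ^ 2)) := by
  have h := Real.abs_exp_sub_one_sub_id_le (x := r) (by rwa [abs_of_nonneg hr0])
  have h' : Real.exp r - 1 ≤ r + r ^ 2 := by linarith [le_abs_self (Real.exp r - 1 - r)]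
  linarith [Real.add_one_le_exp (p * (r + r ^ 2)), mul_le_mul_of_nonneg_left h' hp0]

/-- The expected maximum exceeds the mean by at most `2 √(m log n)`. -/
lemma expMaxBinom_le {n m : ℕ} {p : ℝ} (hn : 2 ≤ n) (hm : 1 ≤ m) (hnm : Real.log n ≤ m)
    (hp0 : 0 ≤ p) (hp1 : p ≤ 1) :
    expMaxBinom n m p ≤ m * p + 2 * Real.sqrt (m * Real.log n) := by
  have hm0 : (0 : ℝ) < m := by exact_mod_cast hm
  have hn0 : (0 : ℝ) < n := by positivity
  have hL : 0 < Real.log n := Real.log_pos (by exact_mod_cast hn)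
  set L := Real.log n with hLdef
  set q := Real.sqrt (m * L) with hq
  have hq0 : 0 < q := Real.sqrt_pos.2 (by positivity)
  have hqq : q ^ 2 = m * L := Real.sq_sqrt (by positivity)
  set a := m * p + 2 * q with ha
  set r := q / m with hr
  have hr0 : 0 < r := by positivity
  have hrq : r * q = L := by
    rw [hr]; field_simp; linarith
  have hrr : m * r ^ 2 = L := by
    rw [hr]; field_simp; linarith
  have hr1 : r ≤ 1 := by
    rw [hr, div_le_one hm0]
    exact Real.sqrt_le_iff.2 ⟨hm0.le, by nlinarith⟩
  have hmgf : Real.exp (-(r * a)) * (n * (p * Real.exp r + (1 - p)) ^ m) ≤ 1 := by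
    have hb : (p * Real.exp r + (1 - p)) ^ m ≤ Real.exp (m * (p * (r + r ^ 2))) := by
      rw [Real.exp_nat_mul]
      have : 0 ≤ 1 - p := sub_nonneg.2 hp1
      gcongr
      exact bernoulli_mgf_le hp0 hr0.le hr1
    calc _ ≤ Real.exp (-(r * a)) * (Real.exp L * Real.exp (m * (p * (r + r ^ 2)))) := by
          rw [hLdef, Real.exp_log hn0]
          gcongr
      _ = Real.exp (-(r * a) + (L + m * (p * (r + r ^ 2)))) := by
          rw [Real.exp_add, Real.exp_add]
      _ ≤ 1 := by
          rw [Real.exp_le_one_iff]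
          have e : -(r * a) + (L + m * (p * (r + r ^ 2))) =
              -(2 * (r * q)) + L + p * (m * r ^ 2) := by rw [ha]; ring
          rw [e, hrq, hrr]
          nlinarith
  have key : ∑ j : Fin n → Fin (m + 1), (∏ i, binomPMF m p (j i : ℕ)) *
      (r * maxEntry j - r * a + 1) ≤ 1 := by
    refine le_trans ?_ hmgf
    refine le_trans ?_ (mul_le_mul_of_nonneg_left
      (sum_prod_binomPMF_mul_pow_maxEntry_le (by omega) m hp0 hp1 (Real.exp_pos r).le)
      (Real.exp_pos _).le)
    rw [Finset.mul_sum]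
    refine Finset.sum_le_sum fun j _ => ?_
    rw [mul_left_comm]
    refine mul_le_mul_of_nonneg_left ?_
      (Finset.prod_nonneg fun i _ => binomPMF_nonneg hp0 hp1 _ _)
    rw [← Real.exp_nat_mul, ← Real.exp_add]
    refine le_trans (Real.add_one_le_exp _) (Real.exp_le_exp.2 (by linarith))
  have expand : ∑ j : Fin n → Fin (m + 1), (∏ i, binomPMF m p (j i : ℕ)) *
      (r * maxEntry j - r * a + 1) = r * expMaxBinom n m p + (1 - r * a) := by
    rw [expMaxBinom, Finset.mul_sum, ← one_mul (1 - r * a), ← sum_prod_binomPMF n m p,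
      Finset.sum_mul, ← Finset.sum_add_distrib, sum_prod_binomPMF]
    refine Finset.sum_congr rfl fun j _ => by ring
  rw [expand] at key
  exact le_of_mul_le_mul_left (by linarith) hr0

/-- The upper tail sum `Σ_{t=⌈(1-s)nm⌉}^{nm} E[max_i Y_i(t) - t/n]/t` with
`Y_1(t), …, Y_n(t)` i.i.d. `Binomial(m, t/(nm))` (so that `E[Y_i(t)] = t/n`). -/
theorem stmt15 :
    ∃ C > 0, ∀ (n m : ℕ) (s : ℝ), 2 ≤ n → 1 ≤ m → 2 * Real.log n ≤ m →
      0 < s → s ≤ 1 / 2 →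
      ∑ t ∈ Finset.Icc ⌈(1 - s) * ((n : ℝ) * m)⌉₊ (n * m),
          (expMaxBinom n m ((t : ℝ) / (n * m)) - (t : ℝ) / n) / t ≤
        C * (s + 1 / ((n : ℝ) * m)) * Real.sqrt (m * Real.log n) := by
  refine ⟨4, by norm_num, fun n m s hn hm hnm hs0 hs1 => ?_⟩
  have hm0 : (0 : ℝ) < m := by exact_mod_cast hm
  have hn0 : (0 : ℝ) < n := by positivity
  set q := Real.sqrt (m * Real.log n)
  have hq0 : 0 ≤ q := Real.sqrt_nonneg _
  set N : ℝ := n * m with hN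
  have hN0 : 0 < N := by positivity
  have hterm : ∀ t ∈ Finset.Icc ⌈(1 - s) * N⌉₊ (n * m),
      (expMaxBinom n m ((t : ℝ) / N) - (t : ℝ) / n) / t ≤ 4 * q / N := by
    intro t ht
    obtain ⟨h1, h2⟩ := Finset.mem_Icc.1 ht
    have h1' : (1 - s) * N ≤ t := Nat.ceil_le.1 h1
    have h2' : (t : ℝ) ≤ N := by rw [hN]; exact_mod_cast h2
    have ht2 : N / 2 ≤ t := by nlinarith
    have ht0 : (0 : ℝ) < t := by linarith
    have hE := expMaxBinom_le (p := (t : ℝ) / N) hn hm (by linarith) (by positivity)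
      ((div_le_one hN0).2 h2')
    have hmean : (m : ℝ) * (t / N) = t / n := by rw [hN]; field_simp
    rw [hmean] at hE
    rw [div_le_div_iff₀ ht0 hN0]
    calc _ ≤ 2 * q * N := by gcongr; linarith
      _ ≤ 4 * q * t := by nlinarith
  have hcard : ((Finset.Icc ⌈(1 - s) * N⌉₊ (n * m)).card : ℝ) ≤ s * N + 1 := by
    have hle : ⌈(1 - s) * N⌉₊ ≤ n * m := by
      rw [Nat.ceil_le]
      push_cast
      nlinarith
    rw [Nat.card_Icc, Nat.cast_sub (by omega)]
    push_cast
    linarith [Nat.le_ceil ((1 - s) * N)]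
  calc _ ≤ ((Finset.Icc ⌈(1 - s) * N⌉₊ (n * m)).card : ℝ) * (4 * q / N) := by
        rw [← nsmul_eq_mul]
        exact Finset.sum_le_card_nsmul _ _ _ hterm
    _ ≤ (s * N + 1) * (4 * q / N) := by gcongr
    _ = 4 * (s + 1 / N) * q := by field_simp
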